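/- Let n ≥ 1 and 0 < α < 1. If φ is a Schwartz function on ℝⁿ×ℝ, then for every m > 0 there exists a constant C > 0 such that for all (x,t) ∈ ℝⁿ×ℝ, |D_right^α φ(x,t)| ≤ C / ((1+|x|^m)(1+|t|^{1+α})). -/

import Mathlib

open MeasureTheory Set

/-- The right Marchaud fractional derivative of order `α` in the time variable:
`D_right^α φ(x,t) = C_α ∫_t^∞ (φ(x,t) - φ(x,τ))/(τ-t)^{1+α} dτ`, `C_α = 1/|Γ(-α)|`. -/
noncomputable def marchaudRight {n : ℕ} (α : ℝ) (φ : EuclideanSpace ℝ (Fin n) × ℝ → ℝ)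
    (x : EuclideanSpace ℝ (Fin n)) (t : ℝ) : ℝ :=
  (1 / |Real.Gamma (-α)|) * ∫ τ in Ioi t, (φ (x, t) - φ (x, τ)) / (τ - t) ^ (1 + α)

/-- A function whose derivative decays quadratically varies slowly to the right of `t`, up to distance
comparable with `1 + |t|`. -/
lemma abs_sub_le_of_abs_deriv_le {f f' : ℝ → ℝ} (hf : ∀ s, HasDerivAt f (f' s) s) {K : ℝ}
    (hf' : ∀ s, |f' s| ≤ K / (1 + |s|) ^ 2) {t τ : ℝ} (hτ : τ ∈ Ioc t (t + (1 + |t|) / 2)) :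
    |f t - f τ| ≤ 4 * K / (1 + |t|) ^ 2 * (τ - t) := by
  have hK : 0 ≤ K := by simpa using (abs_nonneg _).trans (hf' 0)
  have hT : 0 < 1 + |t| := by positivity
  have bound : ∀ s ∈ Icc t (t + (1 + |t|) / 2), ‖f' s‖ ≤ 4 * K / (1 + |t|) ^ 2 := by
    intro s hs
    refine (hf' s).trans ?_
    have hts : (1 + |t|) / 2 ≤ 1 + |s| := by
      have := abs_sub_abs_le_abs_sub t s
      rw [abs_sub_comm, abs_of_nonneg (sub_nonneg.2 hs.1)] at this
      linarith [hs.2]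
    calc K / (1 + |s|) ^ 2 ≤ K / ((1 + |t|) / 2) ^ 2 := by gcongr
      _ = 4 * K / (1 + |t|) ^ 2 := by field_simp; ring
  have := (convex_Icc t (t + (1 + |t|) / 2)).norm_image_sub_le_of_norm_hasDerivWithin_le
    (fun s _ => (hf s).hasDerivWithinAt) bound (x := τ) (y := t) ⟨hτ.1.le, hτ.2⟩
    ⟨le_rfl, by linarith⟩
  rwa [Real.norm_eq_abs, Real.norm_eq_abs, abs_sub_comm t τ,
    abs_of_pos (sub_pos.2 hτ.1)] at this

lemma abs_setIntegral_marchaud_near_le {α : ℝ} (hα1 : α < 1) {f f' : ℝ → ℝ}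
    (hf : ∀ s, HasDerivAt f (f' s) s) {K : ℝ} (hf' : ∀ s, |f' s| ≤ K / (1 + |s|) ^ 2) (t : ℝ) :
    |∫ τ in Ioc t (t + (1 + |t|) / 2), (f t - f τ) / (τ - t) ^ (1 + α)| ≤
      4 * K / (1 + |t|) ^ 2 * (((1 + |t|) / 2) ^ (1 - α) / (1 - α)) := by
  have hle : t ≤ t + (1 + |t|) / 2 := by linarith [abs_nonneg t]
  have hint : IntegrableOn (fun τ : ℝ => (τ - t) ^ (-α)) (Ioc t (t + (1 + |t|) / 2)) := by
    rw [← intervalIntegrable_iff_integrableOn_Ioc_of_le hle]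
    have h : IntervalIntegrable (fun u : ℝ => u ^ (-α)) volume 0 ((1 + |t|) / 2) :=
      intervalIntegral.intervalIntegrable_rpow' (by linarith)
    simpa [add_comm] using h.comp_sub_right t
  have hval : ∫ τ in Ioc t (t + (1 + |t|) / 2), (τ - t) ^ (-α) =
      ((1 + |t|) / 2) ^ (1 - α) / (1 - α) := by
    rw [← intervalIntegral.integral_of_le hle,
      intervalIntegral.integral_comp_sub_right (fun u : ℝ => u ^ (-α)),
      integral_rpow (Or.inl (by linarith)), sub_self, add_sub_cancel_left, neg_add_eq_sub,
      Real.zero_rpow (by linarith), sub_zero]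
  rw [← hval, ← integral_const_mul]
  rw [← Real.norm_eq_abs]
  refine norm_integral_le_of_norm_le (hint.const_mul _)
    (ae_restrict_of_forall_mem measurableSet_Ioc fun τ hτ => ?_)
  have hu : 0 < τ - t := sub_pos.2 hτ.1
  rw [Real.norm_eq_abs, abs_div, abs_of_pos (Real.rpow_pos_of_pos hu _),
    div_le_iff₀ (Real.rpow_pos_of_pos hu _), mul_assoc, ← Real.rpow_add hu]
  simpa using abs_sub_le_of_abs_deriv_le hf hf' hτ

lemma abs_setIntegral_marchaud_far_le {α : ℝ} (hα0 : 0 < α) {f : ℝ → ℝ} {K : ℝ}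
    (hf : ∀ s, |f s| ≤ K / (1 + |s|) ^ 2) (t : ℝ) :
    |∫ τ in Ioi (t + (1 + |t|) / 2), (f t - f τ) / (τ - t) ^ (1 + α)| ≤
      K / (1 + |t|) ^ 2 * (((1 + |t|) / 2) ^ (-α) / α) +
        K * ((1 + |t|) / 2) ^ (-(1 + α)) * Real.pi := by
  have hK : 0 ≤ K := by simpa using (abs_nonneg _).trans (hf 0)
  set r := (1 + |t|) / 2
  have hr0 : 0 < r := by positivity
  have hint : IntegrableOn (fun τ : ℝ => (τ - t) ^ (-(1 + α))) (Ioi (t + r)) := by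
    simpa [sub_eq_add_neg] using
      integrableOn_add_rpow_Ioi_of_lt (a := -(1 + α)) (c := t + r) (m := -t)
        (by linarith) (by linarith)
  have hval : ∫ τ in Ioi (t + r), (τ - t) ^ (-(1 + α)) = r ^ (-α) / α := by
    have h := (measurePreserving_sub_right volume t).setIntegral_preimage_emb
      (measurableEmbedding_subRight t) (fun u : ℝ => u ^ (-(1 + α))) (Ioi r)
    rw [preimage_sub_const_Ioi, add_comm r t] at h
    rw [h, integral_Ioi_rpow_of_lt (by linarith) hr0]
    rw [show -(1 + α) + 1 = -α by ring, neg_div_neg_eq]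
  have hinv : IntegrableOn (fun τ : ℝ => (1 + τ ^ 2)⁻¹) (Ioi (t + r)) :=
    integrable_inv_one_add_sq.integrableOn
  have hpi : ∫ τ in Ioi (t + r), (1 + τ ^ 2)⁻¹ ≤ Real.pi := by
    rw [← integral_univ_inv_one_add_sq]
    exact setIntegral_le_integral integrable_inv_one_add_sq
      (Filter.Eventually.of_forall fun τ => by positivity)
  calc
    _ ≤ ∫ τ in Ioi (t + r), (K / (1 + |t|) ^ 2 * (τ - t) ^ (-(1 + α)) +
          K * r ^ (-(1 + α)) * (1 + τ ^ 2)⁻¹) := by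
      rw [← Real.norm_eq_abs]
      refine norm_integral_le_of_norm_le ((hint.const_mul _).add (hinv.const_mul _))
        (ae_restrict_of_forall_mem measurableSet_Ioi fun τ hτ => ?_)
      have hu : r < τ - t := by linarith [mem_Ioi.1 hτ]
      have hu0 : 0 < τ - t := hr0.trans hu
      have hfτ : |f τ| ≤ K * (1 + τ ^ 2)⁻¹ := by
        refine (hf τ).trans ?_
        rw [← div_eq_mul_inv]
        gcongr
        nlinarith [abs_nonneg τ, sq_abs τ]
      have hpow : (τ - t) ^ (-(1 + α)) ≤ r ^ (-(1 + α)) :=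
        Real.rpow_le_rpow_of_nonpos hr0 hu.le (by linarith)
      rw [Real.norm_eq_abs, abs_div, abs_of_pos (Real.rpow_pos_of_pos hu0 _), div_eq_mul_inv,
        ← Real.rpow_neg hu0.le]
      calc |f t - f τ| * (τ - t) ^ (-(1 + α))
          ≤ (K / (1 + |t|) ^ 2 + K * (1 + τ ^ 2)⁻¹) * (τ - t) ^ (-(1 + α)) := by
            gcongr
            exact (abs_sub _ _).trans (add_le_add (hf t) hfτ)
        _ ≤ K / (1 + |t|) ^ 2 * (τ - t) ^ (-(1 + α)) +
            K * (1 + τ ^ 2)⁻¹ * r ^ (-(1 + α)) := by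
            rw [add_mul]
            gcongr
        _ = _ := by ring
    _ = K / (1 + |t|) ^ 2 * (r ^ (-α) / α) +
          K * r ^ (-(1 + α)) * ∫ τ in Ioi (t + r), (1 + τ ^ 2)⁻¹ := by
      rw [integral_add (hint.const_mul _) (hinv.const_mul _), integral_const_mul,
        integral_const_mul, hval]
    _ ≤ _ := by gcongr

/-- Decay of the one-dimensional Marchaud integral of a function with quadratic decay. -/
lemma abs_setIntegral_marchaud_le {α : ℝ} (hα0 : 0 < α) (hα1 : α < 1) {f f' : ℝ → ℝ}
    (hd : ∀ s, HasDerivAt f (f' s) s) {K : ℝ} (hf : ∀ s, |f s| ≤ K / (1 + |s|) ^ 2)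
    (hf' : ∀ s, |f' s| ≤ K / (1 + |s|) ^ 2) (t : ℝ) :
    |∫ τ in Ioi t, (f t - f τ) / (τ - t) ^ (1 + α)| ≤
      K * (4 / (1 - α) + 2 / α + 4 * Real.pi) / (1 + |t|) ^ (1 + α) := by
  have hK : 0 ≤ K := by simpa using (abs_nonneg _).trans (hf 0)
  have h1α : 0 < 1 - α := by linarith
  have hnear := abs_setIntegral_marchaud_near_le hα1 hd hf' t
  have hfar := abs_setIntegral_marchaud_far_le hα0 hf t
  by_cases hint : IntegrableOn (fun τ => (f t - f τ) / (τ - t) ^ (1 + α)) (Ioi t)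
  swap
  · rw [integral_undef hint, abs_zero]
    positivity
  have hle : t ≤ t + (1 + |t|) / 2 := by linarith [abs_nonneg t]
  rw [← Ioc_union_Ioi_eq_Ioi hle, setIntegral_union Ioc_disjoint_Ioi_same measurableSet_Ioi
    (hint.mono_set Ioc_subset_Ioi_self) (hint.mono_set (Ioi_subset_Ioi hle))]
  refine (abs_add_le _ _).trans ((add_le_add hnear hfar).trans ?_)
  have hT : 1 ≤ 1 + |t| := by linarith [abs_nonneg t]
  generalize 1 + |t| = T at hT
  have hT0 : 0 < T := by linarith
  have near : (T / 2) ^ (1 - α) / T ^ 2 ≤ T ^ (-(1 + α)) := by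
    rw [div_le_iff₀ (by positivity), ← Real.rpow_natCast, ← Real.rpow_add hT0]
    refine (Real.rpow_le_rpow (by positivity) (by linarith : T / 2 ≤ T) h1α.le).trans_eq ?_
    congr 1
    push_cast
    ring
  have two_rpow : ∀ {p : ℝ} (k : ℕ), p ≤ k → (T / 2) ^ (-p) ≤ 2 ^ k * T ^ (-p) := by
    intro p k hp
    rw [Real.div_rpow hT0.le zero_le_two, Real.rpow_neg zero_le_two p, div_inv_eq_mul, mul_comm]
    gcongr
    rw [← Real.rpow_natCast]
    exact Real.rpow_le_rpow_of_exponent_le one_le_two hp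
  have mid : (T / 2) ^ (-α) / T ^ 2 ≤ 2 * T ^ (-(1 + α)) := by
    rw [div_le_iff₀ (by positivity), mul_assoc, ← Real.rpow_natCast, ← Real.rpow_add hT0]
    refine (two_rpow 1 (by simpa using hα1.le)).trans ?_
    rw [pow_one]
    gcongr
    push_cast
    linarith
  have far : (T / 2) ^ (-(1 + α)) ≤ 4 * T ^ (-(1 + α)) :=
    (two_rpow 2 (by push_cast; linarith)).trans_eq (by norm_num)
  rw [div_eq_mul_inv _ (T ^ (1 + α)), ← Real.rpow_neg hT0.le]
  calc
    _ = 4 * K / (1 - α) * ((T / 2) ^ (1 - α) / T ^ 2) + (K / α * ((T / 2) ^ (-α) / T ^ 2) +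
          K * Real.pi * (T / 2) ^ (-(1 + α))) := by ring
    _ ≤ 4 * K / (1 - α) * T ^ (-(1 + α)) + (K / α * (2 * T ^ (-(1 + α))) +
          K * Real.pi * (4 * T ^ (-(1 + α)))) := by gcongr
    _ = _ := by ring

lemma one_add_rpow_le_two_mul_rpow {a p q : ℝ} (ha : 0 ≤ a) (hp : 0 ≤ p) (hpq : p ≤ q) :
    1 + a ^ p ≤ 2 * (1 + a) ^ q := by
  have h1 : (1 : ℝ) ≤ (1 + a) ^ q := Real.one_le_rpow (by linarith) (hp.trans hpq)
  have h2 : a ^ p ≤ (1 + a) ^ q :=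
    (Real.rpow_le_rpow ha (by linarith) hp).trans
      (Real.rpow_le_rpow_of_exponent_le (by linarith) hpq)
  linarith

namespace SchwartzMap

variable {E F : Type*} [NormedAddCommGroup E] [NormedSpace ℝ E] [NormedAddCommGroup F]
  [NormedSpace ℝ F]

/-- Separated decay in space and time of the derivatives of order at most one of a Schwartz
function. -/
lemma exists_norm_iteratedFDeriv_le_prod (φ : SchwartzMap (E × ℝ) F) (k : ℕ) :
    ∃ A > (0 : ℝ), ∀ i ≤ 1, ∀ (x : E) (s : ℝ),
      ‖iteratedFDeriv ℝ i φ (x, s)‖ ≤ A / (1 + ‖x‖) ^ k / (1 + |s|) ^ 2 := by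
  refine ⟨2 ^ (k + 2) *
    ((Finset.Iic (k + 2, 1)).sup fun m => SchwartzMap.seminorm ℝ m.1 m.2) φ + 1, by positivity,
    fun i hi x s => ?_⟩
  have h := one_add_le_sup_seminorm_apply (𝕜 := ℝ) (m := (k + 2, 1)) le_rfl hi φ (x, s)
  have hx : ‖x‖ ≤ ‖(x, s)‖ := norm_fst_le (x, s)
  have hs : |s| ≤ ‖(x, s)‖ := norm_snd_le (x, s)
  rw [div_div, le_div_iff₀ (by positivity), mul_comm]
  refine le_trans ?_ (h.trans (le_add_of_nonneg_right zero_le_one))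
  rw [pow_add]
  gcongr

lemma hasDerivAt_snd (φ : SchwartzMap (E × ℝ) F) (x : E) (s : ℝ) :
    HasDerivAt (fun τ => φ (x, τ)) (fderiv ℝ φ (x, s) (0, 1)) s :=
  (φ.differentiableAt.hasFDerivAt (x := (x, s))).comp_hasDerivAt s
    ((hasDerivAt_const s x).prodMk (hasDerivAt_id s))

end SchwartzMap

/-- decay estimate for the right Marchaud derivative of a Schwartz function:
for every `m > 0`, `|D_right^α φ(x,t)| ≤ C / ((1+|x|^m)(1+|t|^{1+α}))`. -/
theorem decay_estimate_marchaud_right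
    (n : ℕ) (hn : 1 ≤ n) (α : ℝ) (hα0 : 0 < α) (hα1 : α < 1)
    (φ : SchwartzMap (EuclideanSpace ℝ (Fin n) × ℝ) ℝ) :
    ∀ m > (0 : ℝ), ∃ C > (0 : ℝ), ∀ (x : EuclideanSpace ℝ (Fin n)) (t : ℝ),
      |marchaudRight α (⇑φ) x t| ≤ C / ((1 + ‖x‖ ^ m) * (1 + |t| ^ (1 + α))) := by
  intro m hm
  obtain ⟨A, hA, hφ⟩ := φ.exists_norm_iteratedFDeriv_le_prod ⌈m⌉₊
  have h1α : 0 < 1 - α := by linarith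
  set c := 4 / (1 - α) + 2 / α + 4 * Real.pi
  have hc0 : 0 < c := by positivity
  set g := 1 / |Real.Gamma (-α)|
  have hg0 : 0 ≤ g := by positivity
  refine ⟨4 * g * (A * c) + 1, by positivity, fun x t => ?_⟩
  have hder : ∀ s, |fderiv ℝ φ (x, s) (0, 1)| ≤ A / (1 + ‖x‖) ^ ⌈m⌉₊ / (1 + |s|) ^ 2 := by
    intro s
    have h := hφ 1 le_rfl x s
    rw [norm_iteratedFDeriv_one] at h
    refine le_trans ?_ h
    simpa using (fderiv ℝ φ (x, s)).le_opNorm (0, 1)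
  have key := abs_setIntegral_marchaud_le hα0 hα1 (φ.hasDerivAt_snd x)
    (fun s => by simpa using hφ 0 zero_le_one x s) hder t
  have hX : 1 + ‖x‖ ^ m ≤ 2 * (1 + ‖x‖) ^ ⌈m⌉₊ := by
    simpa using one_add_rpow_le_two_mul_rpow (norm_nonneg x) hm.le (Nat.le_ceil m)
  have hT := one_add_rpow_le_two_mul_rpow (abs_nonneg t) (by linarith : 0 ≤ 1 + α) le_rfl
  calc |marchaudRight α φ x t|
      ≤ g * (A / (1 + ‖x‖) ^ ⌈m⌉₊ * c / (1 + |t|) ^ (1 + α)) := by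
        rw [marchaudRight, abs_mul, abs_of_nonneg hg0]
        gcongr
    _ = 4 * g * (A * c) / ((2 * (1 + ‖x‖) ^ ⌈m⌉₊) * (2 * (1 + |t|) ^ (1 + α))) := by
        field_simp
        ring
    _ ≤ (4 * g * (A * c) + 1) / ((1 + ‖x‖ ^ m) * (1 + |t| ^ (1 + α))) := by
        gcongr
        linarith
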